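/- Let S be the Motzkin monoid M_n or the Jones monoid J_n, let k be a field and ξ ∈ k ∖ {0}. Then: (i) the map α ↦ ξ^{−m(α,α)}·α is a bijection from E(S) onto E(⟨S^ξ, ξ·1, ξ^{−1}·1⟩); (ii) if ξ is a root of unity then |E(⟨S^ξ, ξ·1⟩)| = |E(S)|; and (iii) if ξ is not a root of unity then E(⟨S^ξ, ξ·1⟩) = E(S^ξ) = {α ∈ E(S) : m(α,α) = 0}. -/

import Mathlib

open Relation

/-! ### The partition monoid and its planar submonoids -/

/-- Vertices of a partition diagram: `Sum.inl i` is the upper vertex `i`,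
`Sum.inr i` is the lower vertex `i′`. -/
abbrev PV (n : ℕ) := Fin n ⊕ Fin n

/-- An element of the partition monoid `P_n`: a set partition of the `2n` vertices,
encoded as an equivalence relation (setoid). -/
abbrev PElt (n : ℕ) := Setoid (PV n)

/-- Three layers of vertices, used to form products. -/
abbrev TV (n : ℕ) := Fin n ⊕ (Fin n ⊕ Fin n)

/-- Embedding of the vertices of the upper factor into the three layers. -/
def upEmb {n : ℕ} : PV n → TV n
  | .inl i => .inl i
  | .inr i => .inr (.inl i)

/-- Embedding of the vertices of the lower factor into the three layers. -/
def downEmb {n : ℕ} : PV n → TV n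
  | .inl i => .inr (.inl i)
  | .inr i => .inr (.inr i)

/-- Embedding of the vertices of the product into the three layers. -/
def outEmb {n : ℕ} : PV n → TV n
  | .inl i => .inl i
  | .inr i => .inr (.inr i)

/-- The stacked graph of `a` on `b`: relations of `a` on layers 1–2 together with
relations of `b` on layers 2–3. -/
def stackRel {n : ℕ} (a b : PElt n) : TV n → TV n → Prop := fun x y =>
  (∃ p q : PV n, a.r p q ∧ x = upEmb p ∧ y = upEmb q) ∨
  (∃ p q : PV n, b.r p q ∧ x = downEmb p ∧ y = downEmb q)

/-- The finest common coarsening (transitive closure) of the stacked graph. -/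
def stackSetoid {n : ℕ} (a b : PElt n) : Setoid (TV n) :=
  EqvGen.setoid (stackRel a b)

/-- The product in the partition monoid: restrict the coarsening of the stacked graph
to the outer two layers. -/
def pmul {n : ℕ} (a b : PElt n) : PElt n :=
  Setoid.comap outEmb (stackSetoid a b)

/-- The identity of the partition monoid: blocks `{i, i′}`. -/
def pid (n : ℕ) : PElt n :=
  ⟨fun x y => Sum.elim id id x = Sum.elim id id y,
    ⟨fun _ => rfl, fun h => h.symm, fun h₁ h₂ => h₁.trans h₂⟩⟩

/-- A vertex of the triple-layer graph lies in the identified middle row. -/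
def isMiddle {n : ℕ} : TV n → Prop
  | .inr (.inl _) => True
  | _ => False

/-- `m(a,b)`: the number of floating components (components of the stacked graph of `a` on `b`
contained entirely in the identified middle row). -/
noncomputable def floatCount {n : ℕ} (a b : PElt n) : ℕ :=
  Nat.card {c : Quotient (stackSetoid a b) //
    ∀ x : TV n, Quotient.mk (stackSetoid a b) x = c → isMiddle x}

/-- A block (equivalence class) is a transversal if it contains both an upper
and a lower vertex. -/
def IsTransClass {n : ℕ} (a : PElt n) (c : Quotient a) : Prop :=
  (∃ i : Fin n, Quotient.mk a (.inl i) = c) ∧ (∃ j : Fin n, Quotient.mk a (.inr j) = c)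

/-- The rank of a partition: the number of transversal blocks. -/
noncomputable def prank {n : ℕ} (a : PElt n) : ℕ :=
  Nat.card {c : Quotient a // IsTransClass a c}

/-- Position of a vertex in the boundary order `1, …, n, n′, …, 1′` of the rectangle. -/
def ordIdx (n : ℕ) : PV n → ℕ
  | .inl i => i.val
  | .inr i => 2 * n - 1 - i.val

/-- Planarity: the partition is non-crossing with respect to the boundary order
`1 < ⋯ < n < n′ < ⋯ < 1′`. -/
def IsPlanar {n : ℕ} (a : PElt n) : Prop :=
  ¬ ∃ w x y z : PV n, ordIdx n w < ordIdx n x ∧ ordIdx n x < ordIdx n y ∧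
      ordIdx n y < ordIdx n z ∧ a.r w y ∧ a.r x z ∧ ¬ a.r w x

/-- The size of the block containing a given vertex. -/
noncomputable def blockCard {n : ℕ} (a : PElt n) (x : PV n) : ℕ :=
  Nat.card {y : PV n // a.r x y}

/-- The Motzkin monoid: planar partitions with all blocks of size at most 2. -/
def Motzkin (n : ℕ) : Set (PElt n) :=
  {a | IsPlanar a ∧ ∀ x : PV n, blockCard a x ≤ 2}

/-- The Jones (Temperley–Lieb) monoid: planar partitions with all blocks of size
exactly 2. -/
def Jones (n : ℕ) : Set (PElt n) :=
  {a | IsPlanar a ∧ ∀ x : PV n, blockCard a x = 2}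

/-! ### The interface graph -/

/-- Lower edge of the interface graph `Γ(a)`: a block `{i,j}` of `a` on upper vertices. -/
def LowEdge {n : ℕ} (a : PElt n) (i j : Fin n) : Prop :=
  i ≠ j ∧ a.r (.inl i) (.inl j)

/-- Upper edge of the interface graph `Γ(a)`: a block `{i′,j′}` of `a` on lower vertices. -/
def UpEdge {n : ℕ} (a : PElt n) (i j : Fin n) : Prop :=
  i ≠ j ∧ a.r (.inr i) (.inr j)

/-- Vertex `i` of `Γ(a)` carries a lower edge. -/
def hasLow {n : ℕ} (a : PElt n) (i : Fin n) : Prop := ∃ j, LowEdge a i j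

/-- Vertex `i` of `Γ(a)` carries an upper edge. -/
def hasUp {n : ℕ} (a : PElt n) (i : Fin n) : Prop := ∃ j, UpEdge a i j

/-- Vertex `i` is active downwards: the upper vertex `i` lies in a transversal of `a`. -/
def activeDown {n : ℕ} (a : PElt n) (i : Fin n) : Prop := ∃ j : Fin n, a.r (.inl i) (.inr j)

/-- Vertex `i` is active upwards: the lower vertex `i′` lies in a transversal of `a`. -/
def activeUp {n : ℕ} (a : PElt n) (i : Fin n) : Prop := ∃ j : Fin n, a.r (.inr i) (.inl j)

/-- Vertex `i` is inert downwards: the upper vertex `i` is a singleton block of `a`. -/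
def inertDown {n : ℕ} (a : PElt n) (i : Fin n) : Prop := ∀ y, a.r (.inl i) y → y = .inl i

/-- Vertex `i` is inert upwards: the lower vertex `i′` is a singleton block of `a`. -/
def inertUp {n : ℕ} (a : PElt n) (i : Fin n) : Prop := ∀ y, a.r (.inr i) y → y = .inr i

/-- Adjacency in the interface graph `Γ(a)`. -/
def gedge {n : ℕ} (a : PElt n) (i j : Fin n) : Prop := LowEdge a i j ∨ UpEdge a i j

/-- Connectivity in the interface graph `Γ(a)`. -/
def gconn {n : ℕ} (a : PElt n) : Fin n → Fin n → Prop := EqvGen (gedge a)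

/-- `θ` is (the vertex set of) a connected component of `Γ(a)`. -/
def IsComp {n : ℕ} (a : PElt n) (θ : Set (Fin n)) : Prop :=
  θ.Nonempty ∧ ∀ i ∈ θ, ∀ j : Fin n, (gconn a i j ↔ j ∈ θ)

/-- `θ` is a cycle component of `Γ(a)`: every vertex carries both a lower and an upper edge. -/
def IsCycleComp {n : ℕ} (a : PElt n) (θ : Set (Fin n)) : Prop :=
  IsComp a θ ∧ ∀ i ∈ θ, hasLow a i ∧ hasUp a i

/-- `θ` is a path component of `Γ(a)`: some vertex misses an edge on some side. -/
def IsPathComp {n : ℕ} (a : PElt n) (θ : Set (Fin n)) : Prop :=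
  IsComp a θ ∧ ∃ i ∈ θ, ¬ hasLow a i ∨ ¬ hasUp a i

/-- An inert path: every terminus is inert on its free side. -/
def IsInertPathComp {n : ℕ} (a : PElt n) (θ : Set (Fin n)) : Prop :=
  IsPathComp a θ ∧ ∀ i ∈ θ,
    (¬ hasLow a i → inertDown a i) ∧ (¬ hasUp a i → inertUp a i)

/-- A trans-active path: even length (its two free ends lie on opposite sides) with
both termini active on their free sides. -/
def IsTransActivePathComp {n : ℕ} (a : PElt n) (θ : Set (Fin n)) : Prop :=
  IsPathComp a θ ∧
  (∃! i : Fin n, i ∈ θ ∧ ¬ hasLow a i) ∧ (∃! i : Fin n, i ∈ θ ∧ ¬ hasUp a i) ∧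
  ∀ i ∈ θ, (¬ hasLow a i → activeDown a i) ∧ (¬ hasUp a i → activeUp a i)

/-- The number of edges of `Γ(a)` contained in `θ` (its length, for a component `θ`). -/
noncomputable def compEdgeCount {n : ℕ} (a : PElt n) (θ : Set (Fin n)) : ℕ :=
  Nat.card {p : Fin n × Fin n // p.1 < p.2 ∧ p.1 ∈ θ ∧ p.2 ∈ θ ∧ LowEdge a p.1 p.2} +
  Nat.card {p : Fin n × Fin n // p.1 < p.2 ∧ p.1 ∈ θ ∧ p.2 ∈ θ ∧ UpEdge a p.1 p.2}

/-! ### The map `α ↦ α̂` and the sets `D`, `Θ(δ)` -/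

/-- The 0-based position of `i` among the upward-active vertices. -/
noncomputable def posUp {n : ℕ} (a : PElt n) (i : Fin n) : ℕ :=
  Nat.card {j : Fin n // j < i ∧ activeUp a j}

/-- The 0-based position of `i` among the downward-active vertices. -/
noncomputable def posDown {n : ℕ} (a : PElt n) (i : Fin n) : ℕ :=
  Nat.card {j : Fin n // j < i ∧ activeDown a j}

/-- `i` and `j` are consecutive upward-active vertices paired in forming `α̂`
(`i` in an even position `2t`, `j` in position `2t+1 < 2⌊r/2⌋`). -/
noncomputable def pairedUp {n : ℕ} (a : PElt n) (i j : Fin n) : Prop :=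
  activeUp a i ∧ activeUp a j ∧ Even (posUp a i) ∧ posUp a j = posUp a i + 1 ∧
    posUp a j < 2 * (prank a / 2)

/-- `i` and `j` are consecutive downward-active vertices paired in forming `α̂`. -/
noncomputable def pairedDown {n : ℕ} (a : PElt n) (i j : Fin n) : Prop :=
  activeDown a i ∧ activeDown a j ∧ Even (posDown a i) ∧ posDown a j = posDown a i + 1 ∧
    posDown a j < 2 * (prank a / 2)

/-- The transversal relations removed in forming `α̂` (those of the first `2⌊r/2⌋`
transversals). -/
noncomputable def removedTrans {n : ℕ} (a : PElt n) (x y : PV n) : Prop :=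
  ∃ i j : Fin n, a.r (.inl i) (.inr j) ∧ posDown a i < 2 * (prank a / 2) ∧
    ((x = .inl i ∧ y = .inr j) ∨ (x = .inr j ∧ y = .inl i))

/-- The generating relation of `α̂`: the relations of `α` minus the removed transversals,
plus the new blocks pairing consecutive active vertices. -/
noncomputable def hatRel {n : ℕ} (a : PElt n) (x y : PV n) : Prop :=
  (a.r x y ∧ ¬ removedTrans a x y) ∨
  (∃ i j : Fin n, pairedUp a i j ∧
      ((x = .inr i ∧ y = .inr j) ∨ (x = .inr j ∧ y = .inr i))) ∨
  (∃ i j : Fin n, pairedDown a i j ∧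
      ((x = .inl i ∧ y = .inl j) ∨ (x = .inl j ∧ y = .inl i)))

/-- The element `α̂` obtained from `α` by pairing off consecutive active vertices. -/
noncomputable def hat {n : ℕ} (a : PElt n) : PElt n := EqvGen.setoid (hatRel a)

/-- The idempotents of a subset `S` (with respect to the partition product). -/
def Eset {n : ℕ} (S : Set (PElt n)) : Set (PElt n) := {a ∈ S | pmul a a = a}

/-- `D(S) = D₀ ∪ E(D₁)`: the idempotents of `S` of rank at most 1. -/
def Dset {n : ℕ} (S : Set (PElt n)) : Set (PElt n) :=
  {d ∈ S | pmul d d = d ∧ prank d ≤ 1}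

/-- `θ` lies (entirely) to the left of the leftmost transversal of `a`. -/
def LeftOfTrans {n : ℕ} (a : PElt n) (θ : Set (Fin n)) : Prop :=
  ∀ i ∈ θ, ∀ j : Fin n, activeDown a j ∨ activeUp a j → i < j

/-- `Θ(a)`: the cycle components of `Γ(a)` lying entirely to the left of the leftmost
transversal. -/
def ThetaSet {n : ℕ} (a : PElt n) : Set (Set (Fin n)) :=
  {θ | IsCycleComp a θ ∧ LeftOfTrans a θ}

/-! ### Returns, special pairs and `θ`-covers -/

/-- The block `{i,j}` of `a` on upper vertices is an upper return: no upper block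
`{k,l}` has `k<i<j<l`, and no transversal contains an upper vertex smaller than `i`. -/
def UpperReturn {n : ℕ} (a : PElt n) (i j : Fin n) : Prop :=
  i < j ∧ a.r (.inl i) (.inl j) ∧
  (¬ ∃ k l : Fin n, k < i ∧ j < l ∧ a.r (.inl k) (.inl l)) ∧
  (¬ ∃ k : Fin n, k < i ∧ activeDown a k)

/-- The block `{i′,j′}` of `a` on lower vertices is a lower return. -/
def LowerReturn {n : ℕ} (a : PElt n) (i j : Fin n) : Prop :=
  i < j ∧ a.r (.inr i) (.inr j) ∧
  (¬ ∃ k l : Fin n, k < i ∧ j < l ∧ a.r (.inr k) (.inr l)) ∧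
  (¬ ∃ k : Fin n, k < i ∧ activeUp a k)

/-- The interface-graph adjacency of `a` after deleting the lower-vertex block `{i′,j′}`
and the upper-vertex block `{k,l}`. -/
def redEdge {n : ℕ} (a : PElt n) (i j k l : Fin n) (u v : Fin n) : Prop :=
  (LowEdge a u v ∧ ({u, v} : Set (Fin n)) ≠ {k, l}) ∨
  (UpEdge a u v ∧ ({u, v} : Set (Fin n)) ≠ {i, j})

/-- The relation generating the `θ`-cover `a − (e′,f)`, for `e′ = {i′,j′}` and
`f = {k,l}`: delete the two blocks, and join each freed upper vertex to the freed lower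
vertex reached along its path. -/
def coverRel {n : ℕ} (a : PElt n) (i j k l : Fin n) (x y : PV n) : Prop :=
  (a.r x y ∧ ({x, y} : Set (PV n)) ≠ {.inl k, .inl l} ∧
    ({x, y} : Set (PV n)) ≠ {.inr i, .inr j}) ∨
  (∃ u v : Fin n, u ∈ ({k, l} : Set (Fin n)) ∧ v ∈ ({i, j} : Set (Fin n)) ∧
    EqvGen (redEdge a i j k l) u v ∧
    ((x = .inl u ∧ y = .inr v) ∨ (x = .inr v ∧ y = .inl u)))

/-- The `θ`-cover `a − (e′,f)` as a partition. -/
def coverElt {n : ℕ} (a : PElt n) (i j k l : Fin n) : PElt n :=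
  EqvGen.setoid (coverRel a i j k l)

/-- `b` is a `θ`-cover of `a`: `θ ∈ Θ(a)` and `b = a − (e′,f)` for some special pair
`(e′,f)` over `θ` (one lower-return and one upper-return edge of `θ`). -/
def IsThetaCover {n : ℕ} (a : PElt n) (θ : Set (Fin n)) (b : PElt n) : Prop :=
  θ ∈ ThetaSet a ∧
  ∃ i j k l : Fin n, i ∈ θ ∧ j ∈ θ ∧ k ∈ θ ∧ l ∈ θ ∧
    LowerReturn a i j ∧ UpperReturn a k l ∧ b = coverElt a i j k l

/-- `a ≪_d b`: `a = b` or there is a chain of `θ`-covers from `a` to `b` along pairwise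
distinct cycles `θ ∈ Θ(d)`. -/
def llRel {n : ℕ} (d : PElt n) (a b : PElt n) : Prop :=
  a = b ∨ ∃ (h : ℕ) (θs : Fin h → Set (Fin n)) (as : Fin (h + 1) → PElt n),
    Function.Injective θs ∧ (∀ ι, θs ι ∈ ThetaSet d) ∧
    as 0 = a ∧ as (Fin.last h) = b ∧
    ∀ ι : Fin h, IsThetaCover (as ι.castSucc) (θs ι) (as ι.succ)

/-- The fibre `F_d = {α ∈ E(S) : α̂ = d}`. -/
def Fib {n : ℕ} (S : Set (PElt n)) (d : PElt n) : Set (PElt n) :=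
  {a ∈ Eset S | hat a = d}

/-- `C_d(θ) = C*_d(θ) ∪ {d}`, where `C*_d(θ)` is the set of `θ`-covers of `d`. -/
def CoverSet {n : ℕ} (d : PElt n) (θ : Set (Fin n)) : Set (PElt n) :=
  insert d {b | IsThetaCover d θ b}

/-- `u_θ`: the number of upper-return blocks among the edges of `θ`. -/
noncomputable def uRet {n : ℕ} (a : PElt n) (θ : Set (Fin n)) : ℕ :=
  Nat.card {p : Fin n × Fin n // p.1 ∈ θ ∧ p.2 ∈ θ ∧ UpperReturn a p.1 p.2}

/-- `l_θ`: the number of lower-return blocks among the edges of `θ`. -/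
noncomputable def lRet {n : ℕ} (a : PElt n) (θ : Set (Fin n)) : ℕ :=
  Nat.card {p : Fin n × Fin n // p.1 ∈ θ ∧ p.2 ∈ θ ∧ LowerReturn a p.1 p.2}

/-! ### Twisted semigroup algebras -/

variable {K : Type} [Field K]

/-- The underlying vector space of the semigroup algebra `k[P_n]`. -/
abbrev PAlg (n : ℕ) (K : Type) [Field K] := PElt n →₀ K

/-- The twisted multiplication on `k[P_n]`: on basis elements,
`a ∘ b = ξ^{m(a,b)} · (ab)`, extended bilinearly. -/
noncomputable def twistMul {n : ℕ} (ξ : K) (f g : PAlg n K) : PAlg n K :=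
  f.sum fun a ca => g.sum fun b cb =>
    Finsupp.single (pmul a b) (ca * cb * ξ ^ floatCount a b)

/-- The twisted variant `S^ξ`: the subsemigroup of `(k[S], ∘)` generated by (the basis
elements corresponding to) `S`. -/
def TwistedVariant {n : ℕ} (ξ : K) (S : Set (PElt n)) : Set (PAlg n K) :=
  ⋂₀ {T : Set (PAlg n K) | (∀ a ∈ S, Finsupp.single a (1 : K) ∈ T) ∧
      ∀ f ∈ T, ∀ g ∈ T, twistMul ξ f g ∈ T}

/-- The idempotents of a set of elements of the twisted algebra. -/
def EsetTwist {n : ℕ} (ξ : K) (X : Set (PAlg n K)) : Set (PAlg n K) :=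
  {f ∈ X | twistMul ξ f f = f}

/-- `⟨S^ξ, ξ·1⟩ = {ξ^i·α : i ∈ ℕ, α ∈ S}`. -/
def TwistNat {n : ℕ} (ξ : K) (S : Set (PElt n)) : Set (PAlg n K) :=
  {f | ∃ (i : ℕ), ∃ a ∈ S, f = Finsupp.single a (ξ ^ i)}

/-- `⟨S^ξ, ξ·1, ξ⁻¹·1⟩ = {ξ^i·α : i ∈ ℤ, α ∈ S}`. -/
def TwistInt {n : ℕ} (ξ : K) (S : Set (PElt n)) : Set (PAlg n K) :=
  {f | ∃ (i : ℤ), ∃ a ∈ S, f = Finsupp.single a (ξ ^ i)}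

/-! ### Idempotent statistics of the Jones monoid -/

/-- The number of cycle components of `Γ(a)`. -/
noncomputable def numCycles {n : ℕ} (a : PElt n) : ℕ :=
  Nat.card {θ : Set (Fin n) // IsCycleComp a θ}

/-- The number of path components of `Γ(a)`. -/
noncomputable def numPaths {n : ℕ} (a : PElt n) : ℕ :=
  Nat.card {θ : Set (Fin n) // IsPathComp a θ}

/-- `E_{n;c,p}`: the idempotents of the Jones monoid `J_n` with `c` cycle components and
`p` path components (out-of-range indices give the empty set). -/
def EJcp (n : ℕ) (c p : ℤ) : Set (PElt n) :=
  {a ∈ Jones n | pmul a a = a ∧ (numCycles a : ℤ) = c ∧ (numPaths a : ℤ) = p}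

/-- `e_{n;c,p} = |E_{n;c,p}|`. -/
noncomputable def eJ (n : ℕ) (c p : ℤ) : ℕ := Nat.card (EJcp n c p)

/-- `e_{n;·,p} = Σ_c e_{n;c,p}`: the number of idempotents of `J_n` of rank `p`. -/
noncomputable def eJdot (n : ℕ) (p : ℤ) : ℕ :=
  Nat.card {a : PElt n | a ∈ Jones n ∧ pmul a a = a ∧ (numPaths a : ℤ) = p}

/-- `S^{(1)}_{n;c,p} = Σ_{α ∈ E_{n;c,p}} Σ_{θ ∈ Θ(α)} (u_θ + l_θ)`. -/
noncomputable def S1 (n : ℕ) (c p : ℤ) : ℕ :=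
  ∑ᶠ a ∈ EJcp n c p, ∑ᶠ θ ∈ ThetaSet a, (uRet a θ + lRet a θ)

/-- `S^{(2)}_{n;c,p} = Σ_{α ∈ E_{n;c,p}} Σ_{θ₁ ≠ θ₂ ∈ Θ(α)} u_{θ₁}·l_{θ₂}`
(the inner sum over ordered pairs of distinct cycles). -/
noncomputable def S2 (n : ℕ) (c p : ℤ) : ℕ :=
  ∑ᶠ a ∈ EJcp n c p, ∑ᶠ q ∈ {q : Set (Fin n) × Set (Fin n) |
      q.1 ∈ ThetaSet a ∧ q.2 ∈ ThetaSet a ∧ q.1 ≠ q.2}, uRet a q.1 * lRet a q.2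

/-- `S^{(1)}_{n;·,p}`. -/
noncomputable def S1dot (n : ℕ) (p : ℤ) : ℕ :=
  ∑ᶠ a ∈ {a : PElt n | a ∈ Jones n ∧ pmul a a = a ∧ (numPaths a : ℤ) = p},
    ∑ᶠ θ ∈ ThetaSet a, (uRet a θ + lRet a θ)

/-- `S^{(2)}_{n;·,p}`. -/
noncomputable def S2dot (n : ℕ) (p : ℤ) : ℕ :=
  ∑ᶠ a ∈ {a : PElt n | a ∈ Jones n ∧ pmul a a = a ∧ (numPaths a : ℤ) = p},
    ∑ᶠ q ∈ {q : Set (Fin n) × Set (Fin n) |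
      q.1 ∈ ThetaSet a ∧ q.2 ∈ ThetaSet a ∧ q.1 ≠ q.2}, uRet a q.1 * lRet a q.2

/-! Once `S` is known to be closed under the product, the scalar `c` in an idempotent `c·α` of the
twisted algebra is forced to be `ξ^{−m(α,α)}`, and it is a nonnegative power of `ξ` exactly when `ξ`
has finite order or `m(α,α) = 0`.

Closure under the product is linear algebra over `𝔽₂`. A connection between two outer vertices `x`,
`y` of the stacked graph of `a` on `b` is recorded by three rows `t`, `m`, `s` of coefficients such
that `(t, m)` is a sum of pairs `δ_p + δ_q` from blocks of `a`, `(m, s)` is such a sum for `b`, and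
`(t, s) = δ_x + δ_y`. A non-crossing partition annihilates the bilinear form `Σ_{u < v} f(u) g(v)`
on such sums taken from different blocks, and this form is additive under stacking, so a crossing
in the product would give `1 = 0`. If all blocks have size at most 2, the elements of such sums are
constant on blocks, so `δ_x + δ_y` is constant on the block of `x` in the product. -/

section Blocks

variable {α : Type*}

lemma sum_eq_zero_of_even_blocks [Fintype α] (r : Setoid α)
    (hr : ∀ x, Even (Nat.card {y // r.r x y})) {f : α → ZMod 2} (hf : ∀ x y, r.r x y → f x = f y) :
    ∑ x, f x = 0 := by
  classical
  rw [Finset.sum_partition r]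
  refine Finset.sum_eq_zero fun c _ => ?_
  induction c using Quotient.inductionOn with
  | h x =>
    have hconst : ∀ y ∈ Finset.univ.filter (fun y => (⟦y⟧ : Quotient r) = ⟦x⟧), f y = f x :=
      fun y hy => hf y x (Quotient.exact (Finset.mem_filter.1 hy).2)
    have hcard : (Finset.univ.filter (fun y => (⟦y⟧ : Quotient r) = ⟦x⟧)).card =
        Nat.card {y // r.r x y} := by
      rw [Nat.card_eq_fintype_card, Fintype.card_subtype]
      exact congrArg _ (Finset.filter_congr fun y _ => Quotient.eq.trans r.comm')
    rw [Finset.sum_congr rfl hconst, Finset.sum_const, hcard, nsmul_eq_mul,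
      ZMod.natCast_eq_zero_iff_even.2 (hr x), zero_mul]

lemma card_block_le_two_iff [Finite α] (r : Setoid α) (x : α) :
    Nat.card {y // r.r x y} ≤ 2 ↔ ∀ y z, r.r x y → r.r x z → x ≠ y → x ≠ z → y = z := by
  rw [← not_lt, show Nat.card {y // r.r x y} = {y | r.r x y}.ncard from rfl,
    Set.two_lt_ncard_iff (Set.toFinite _)]
  constructor
  · intro h y z hy hz hxy hxz
    by_contra hyz
    exact h ⟨x, y, z, r.refl' x, hy, hz, hxy, hxz, hyz⟩
  · rintro h ⟨u, v, w, hu, hv, hw, huv, huw, hvw⟩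
    by_cases hxu : x = u
    · exact hvw (h v w hv hw (hxu ▸ huv) (hxu ▸ huw))
    by_cases hxv : x = v
    · exact huw (h u w hu hw hxu (hxv ▸ hvw))
    · exact huv (h u v hu hv hxu hxv)

/-- The functions `α → 𝔽₂` that are sums of pairs `δ_p + δ_q` with `p` and `q` elements of `C` in
the same block of `r`; equivalently, those with finite support contained in `C` and meeting every
block of `r` in an even number of elements of `C`. -/
def pairSums [DecidableEq α] (r : Setoid α) (C : Set α) : AddSubmonoid (α → ZMod 2) :=
  AddSubmonoid.closure {f | ∃ p ∈ C, ∃ q ∈ C, r.r p q ∧ Pi.single p 1 + Pi.single q 1 = f}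

variable [DecidableEq α] {r : Setoid α} {C : Set α} {f : α → ZMod 2}

lemma apply_eq_zero_of_mem_pairSums (hf : f ∈ pairSums r C) {x : α} (hx : x ∉ C) : f x = 0 := by
  induction hf using AddSubmonoid.closure_induction with
  | mem f hf =>
    obtain ⟨p, hp, q, hq, -, rfl⟩ := hf
    simp [ne_of_mem_of_not_mem hp hx |>.symm, ne_of_mem_of_not_mem hq hx |>.symm]
  | zero => rfl
  | add f g _ _ hf hg => simp [hf, hg]

lemma sum_eq_zero_of_mem_pairSums [Fintype α] (hf : f ∈ pairSums r C) : ∑ x, f x = 0 := by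
  induction hf using AddSubmonoid.closure_induction with
  | mem f hf =>
    obtain ⟨p, -, q, -, -, rfl⟩ := hf
    simp [Finset.sum_add_distrib, CharTwo.add_self_eq_zero]
  | zero => simp
  | add f g _ _ hf hg => simp [Finset.sum_add_distrib, hf, hg]

lemma apply_eq_apply_of_mem_pairSums [Finite α] (hr : ∀ x, Nat.card {y // r.r x y} ≤ 2)
    (hf : f ∈ pairSums r C) {x y : α} (hxy : r.r x y) : f x = f y := by
  induction hf using AddSubmonoid.closure_induction with
  | mem f hf =>
    obtain ⟨p, -, q, -, hpq, rfl⟩ := hf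
    by_cases hne : x = y
    · rw [hne]
    have hblock : ∀ z, r.r x z → z = x ∨ z = y := fun z hz => by
      by_contra! hz'
      exact hz'.2 ((card_block_le_two_iff r x).1 (hr x) z y hz hxy hz'.1.symm hne)
    by_cases hxp : r.r x p
    · rcases hblock p hxp with rfl | rfl <;> rcases hblock q (r.trans' hxp hpq) with rfl | rfl <;>
        simp [hne, Ne.symm hne, CharTwo.add_self_eq_zero (1 : ZMod 2)]
    · have hxq : ¬ r.r x q := fun h => hxp (r.trans' h (r.symm' hpq))
      have hx : ∀ z, ¬ r.r x z → x ≠ z ∧ y ≠ z := fun z hz =>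
        ⟨fun h => hz (h ▸ r.refl' x), fun h => hz (h ▸ hxy)⟩
      simp [hx p hxp, hx q hxq]
  | zero => rfl
  | add f g _ _ hf hg => simp [hf, hg]

lemma sum_eq_sum_of_elim_mem_pairSums {ι κ : Type*} [Fintype ι] [Fintype κ] [DecidableEq ι]
    [DecidableEq κ] {r : Setoid (ι ⊕ κ)} {C : Set (ι ⊕ κ)} {f : ι → ZMod 2} {g : κ → ZMod 2}
    (h : Sum.elim f g ∈ pairSums r C) : ∑ i, f i = ∑ j, g j := by
  have hsum := sum_eq_zero_of_mem_pairSums h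
  rwa [Fintype.sum_sum_type, CharTwo.add_eq_zero] at hsum

end Blocks

section OrderForm

variable {α β R : Type*} [Fintype α] [LinearOrder β] [CommSemiring R]

/-- The bilinear form `Σ f(u) g(v)` over the pairs `u`, `v` with `o u < o v`. Over `𝔽₂` and with `o`
the position on a circle cut open, its value on two disjoint pairs of points is the parity of the
number of crossings of the corresponding chords. -/
def orderForm (o : α → β) (f g : α → R) : R :=
  ∑ u, ∑ v with o u < o v, f u * g v

variable (o : α → β)

lemma orderForm_add_left (f f' g : α → R) :
    orderForm o (f + f') g = orderForm o f g + orderForm o f' g := by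
  simp only [orderForm, ← Finset.sum_add_distrib, Pi.add_apply, add_mul]

lemma orderForm_add_right (f g g' : α → R) :
    orderForm o f (g + g') = orderForm o f g + orderForm o f g' := by
  simp only [orderForm, ← Finset.sum_add_distrib, Pi.add_apply, mul_add]

lemma orderForm_zero_left (g : α → R) : orderForm o 0 g = 0 := by
  simp [orderForm]

lemma orderForm_zero_right (f : α → R) : orderForm o f 0 = 0 := by
  simp [orderForm]

lemma orderForm_single_single [DecidableEq α] (p q : α) :
    orderForm o (Pi.single p 1) (Pi.single q (1 : R)) = if o p < o q then 1 else 0 := by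
  rw [orderForm, Fintype.sum_eq_single p fun u hu => by simp [hu], Finset.sum_filter,
    Fintype.sum_eq_single q fun v hv => by simp [hv]]
  simp

lemma orderForm_eq_sum_gt (f g : α → R) :
    orderForm o f g = ∑ v, ∑ u with o u < o v, g v * f u := by
  simp only [orderForm, Finset.sum_filter]
  rw [Finset.sum_comm]
  simp only [mul_comm]

lemma orderForm_add_swap {o : α → β} (ho : Function.Injective o) (f g : α → R) :
    orderForm o f g + orderForm o g f + ∑ u, f u * g u = (∑ u, f u) * ∑ v, g v := by
  classical
  rw [orderForm_eq_sum_gt o g f, orderForm, ← Finset.sum_add_distrib, ← Finset.sum_add_distrib,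
    Finset.sum_mul_sum]
  refine Finset.sum_congr rfl fun u _ => ?_
  have hdiag : f u * g u = ∑ v with o u = o v, f u * g v := by
    simp [ho.eq_iff, Finset.sum_filter]
  simp only [hdiag, Finset.sum_filter, ← Finset.sum_add_distrib]
  refine Finset.sum_congr rfl fun v _ => ?_
  rcases lt_trichotomy (o u) (o v) with h | h | h
  · simp [h, h.ne, h.not_gt]
  · simp [h]
  · simp [h, h.ne', h.not_gt]

lemma orderForm_ordIdx_elim {n : ℕ} (f₁ f₂ g₁ g₂ : Fin n → R) :
    orderForm (ordIdx n) (Sum.elim f₁ f₂) (Sum.elim g₁ g₂) =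
      orderForm Fin.val f₁ g₁ + (∑ i, f₁ i) * (∑ j, g₂ j) + orderForm Fin.val g₂ f₂ := by
  have hll (i j : Fin n) : ordIdx n (.inl i) < ordIdx n (.inl j) ↔ i.val < j.val := Iff.rfl
  have hlr (i j : Fin n) : ordIdx n (.inl i) < ordIdx n (.inr j) := by simp only [ordIdx]; omega
  have hrl (i j : Fin n) : ¬ ordIdx n (.inr i) < ordIdx n (.inl j) := (hlr j i).not_gt
  have hrr (i j : Fin n) : ordIdx n (.inr i) < ordIdx n (.inr j) ↔ j.val < i.val := by
    simp only [ordIdx]; omega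
  rw [orderForm_eq_sum_gt Fin.val g₂ f₂]
  simp only [orderForm, Finset.sum_filter, Fintype.sum_sum_type, Sum.elim_inl, Sum.elim_inr, hll,
    hlr, hrl, hrr, if_true, if_false, Finset.sum_const_zero, Finset.sum_add_distrib,
    Finset.sum_mul_sum, add_zero, add_assoc]

end OrderForm

lemma boole_add_boole_eq_iff {P Q P' Q' : Prop} [Decidable P] [Decidable Q] [Decidable P']
    [Decidable Q'] :
    ((if P then 1 else 0) + (if Q then 1 else 0) : ZMod 2) =
      (if P' then 1 else 0) + (if Q' then 1 else 0) ↔ ((P ↔ Q) ↔ (P' ↔ Q')) := by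
  by_cases P <;> by_cases Q <;> by_cases P' <;> by_cases Q' <;>
    simp [*, CharTwo.add_self_eq_zero (1 : ZMod 2)]

section Stacking

variable {n : ℕ} {a b : PElt n}

lemma orderForm_ordIdx_stack {t m s t' m' s' : Fin n → ZMod 2}
    (htm : ∑ i, t i = ∑ i, m i) (hms : ∑ i, m i = ∑ i, s i)
    (hms' : ∑ i, m' i = ∑ i, s' i) (hdisj : ∀ i, m i * m' i = 0) :
    orderForm (ordIdx n) (Sum.elim t s) (Sum.elim t' s') =
      orderForm (ordIdx n) (Sum.elim t m) (Sum.elim t' m') +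
        orderForm (ordIdx n) (Sum.elim m s) (Sum.elim m' s') := by
  have hmid := orderForm_add_swap Fin.val_injective m m'
  rw [Finset.sum_eq_zero fun i _ => hdisj i] at hmid
  simp only [orderForm_ordIdx_elim, htm, hms, ← hms'] at hmid ⊢
  linear_combination -hmid - (∑ i, s i) * (∑ i, m' i) * CharTwo.two_eq_zero (R := ZMod 2)

lemma ordIdx_injective : Function.Injective (ordIdx n) := by
  rintro (i | i) (j | j) h <;> simp only [ordIdx] at h <;> grind

lemma IsPlanar.orderForm_pair_eq_zero (ha : IsPlanar a) {p q p' q' : PV n} (hpq : a.r p q)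
    (hpq' : a.r p' q') (hne : ¬ a.r p p') :
    orderForm (ordIdx n) (Pi.single p 1 + Pi.single q 1 : PV n → ZMod 2)
      (Pi.single p' 1 + Pi.single q' 1) = 0 := by
  have hnc : ∀ {u v u' v' : PV n}, a.r u v → a.r u' v' → ¬ a.r u u' →
      ¬ (ordIdx n u < ordIdx n u' ∧ ordIdx n u' < ordIdx n v ∧ ordIdx n v < ordIdx n v') :=
    fun huv huv' hne h => ha ⟨_, _, _, _, h.1, h.2.1, h.2.2, huv, huv', hne⟩
  have hqp := a.symm' hpq
  have hqp' := a.symm' hpq'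
  have hpq'ne : ¬ a.r p q' := fun h => hne (a.trans' h hqp')
  have hqp'ne : ¬ a.r q p' := fun h => hne (a.trans' hpq h)
  have hqq'ne : ¬ a.r q q' := fun h => hpq'ne (a.trans' hpq h)
  have hidx : ∀ {u v : PV n}, ¬ a.r u v → ordIdx n u ≠ ordIdx n v := fun huv h =>
    huv (ordIdx_injective h ▸ a.refl' _)
  -- Planarity excludes the eight alternating orders of the two pairs, so `p'` and `q'` lie on the
  -- same side of the chord from `p` to `q`.
  have hparity : (ordIdx n p < ordIdx n p' ↔ ordIdx n q < ordIdx n p') ↔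
      (ordIdx n p < ordIdx n q' ↔ ordIdx n q < ordIdx n q') := by
    have hpp'_idx := hidx hne
    have hpq'_idx := hidx hpq'ne
    have hqp'_idx := hidx hqp'ne
    have hqq'_idx := hidx hqq'ne
    have halt_pq_pq := hnc hpq hpq' hne
    have halt_pq_qp := hnc hpq hqp' hpq'ne
    have halt_qp_pq := hnc hqp hpq' hqp'ne
    have halt_qp_qp := hnc hqp hqp' hqq'ne
    have halt_pq_pq' := hnc hpq' hpq fun h => hne (a.symm' h)
    have halt_pq_qp' := hnc hpq' hqp fun h => hqp'ne (a.symm' h)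
    have halt_qp_pq' := hnc hqp' hpq fun h => hpq'ne (a.symm' h)
    have halt_qp_qp' := hnc hqp' hqp fun h => hqq'ne (a.symm' h)
    omega
  rw [orderForm_add_right, CharTwo.add_eq_zero]
  simp only [orderForm_add_left, orderForm_single_single]
  exact boole_add_boole_eq_iff.2 hparity

lemma IsPlanar.orderForm_eq_zero (ha : IsPlanar a) {C C' : Set (PV n)}
    (hCC' : ∀ p ∈ C, ∀ p' ∈ C', ¬ a.r p p') {f g : PV n → ZMod 2}
    (hf : f ∈ pairSums a C) (hg : g ∈ pairSums a C') : orderForm (ordIdx n) f g = 0 := by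
  induction hf using AddSubmonoid.closure_induction with
  | mem f hf =>
    obtain ⟨p, hp, q, -, hpq, rfl⟩ := hf
    induction hg using AddSubmonoid.closure_induction with
    | mem g hg =>
      obtain ⟨p', hp', q', -, hpq', rfl⟩ := hg
      exact ha.orderForm_pair_eq_zero hpq hpq' (hCC' p hp p' hp')
    | zero => exact orderForm_zero_right _ _
    | add g g' _ _ hg hg' => rw [orderForm_add_right, hg, hg', add_zero]
  | zero => exact orderForm_zero_left _ _
  | add f f' _ _ hf hf' => rw [orderForm_add_left, hf, hf', add_zero]

/-- The component of `x` in the stacked graph of `a` on `b`. -/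
def stackComponent (a b : PElt n) (x : TV n) : Set (TV n) := {v | (stackSetoid a b).r x v}

lemma outEmb_injective : Function.Injective (outEmb (n := n)) := by
  rintro (i | i) (j | j) h <;> simp_all [outEmb]

lemma stackSetoid_upEmb {p q : PV n} (h : a.r p q) : (stackSetoid a b).r (upEmb p) (upEmb q) :=
  EqvGen.rel _ _ (Or.inl ⟨p, q, h, rfl, rfl⟩)

lemma stackSetoid_downEmb {p q : PV n} (h : b.r p q) :
    (stackSetoid a b).r (downEmb p) (downEmb q) :=
  EqvGen.rel _ _ (Or.inr ⟨p, q, h, rfl, rfl⟩)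

lemma apply_eq_apply_of_stackSetoid {β : Type*} {F : TV n → β}
    (hup : ∀ p q, a.r p q → F (upEmb p) = F (upEmb q))
    (hdown : ∀ p q, b.r p q → F (downEmb p) = F (downEmb q)) {u v : TV n}
    (h : (stackSetoid a b).r u v) : F u = F v := by
  have hle : stackSetoid a b ≤ Setoid.ker F := Setoid.eqvGen_le <| by
    rintro _ _ (⟨p, q, h, rfl, rfl⟩ | ⟨p, q, h, rfl, rfl⟩)
    exacts [hup p q h, hdown p q h]
  exact hle h

/-- The sum of a function on the vertices of the upper factor and one on those of the lower factor,
as a function on the three layers; the values on the middle row are added. -/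
def stackSum (f g : PV n → ZMod 2) : TV n → ZMod 2 :=
  Sum.elim (f ∘ .inl) (Sum.elim (f ∘ .inr + g ∘ .inl) (g ∘ .inr))

lemma stackSum_add (f f' g g' : PV n → ZMod 2) :
    stackSum (f + f') (g + g') = stackSum f g + stackSum f' g' := by
  ext (i | i | i) <;> simp [stackSum, add_add_add_comm]

lemma stackSum_single_zero (p : PV n) (c : ZMod 2) :
    stackSum (Pi.single p c) 0 = Pi.single (upEmb p) c := by
  ext (i | i | i) <;> rcases p with j | j <;> simp [stackSum, upEmb, Pi.single_apply]

lemma stackSum_zero_single (p : PV n) (c : ZMod 2) :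
    stackSum 0 (Pi.single p c) = Pi.single (downEmb p) c := by
  ext (i | i | i) <;> rcases p with j | j <;> simp [stackSum, downEmb, Pi.single_apply]

lemma exists_stackSum_eq_of_stackSetoid {x u v : TV n} (hu : (stackSetoid a b).r x u)
    (h : (stackSetoid a b).r u v) :
    ∃ f ∈ pairSums a (upEmb ⁻¹' stackComponent a b x),
      ∃ g ∈ pairSums b (downEmb ⁻¹' stackComponent a b x),
        stackSum f g = Pi.single u 1 + Pi.single v 1 := by
  induction h with
  | rel u v h =>
    have hv : (stackSetoid a b).r x v := (stackSetoid a b).trans' hu (EqvGen.rel _ _ h)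
    rcases h with ⟨p, q, h, rfl, rfl⟩ | ⟨p, q, h, rfl, rfl⟩
    · refine ⟨_, AddSubmonoid.subset_closure ⟨p, hu, q, hv, h, rfl⟩, 0, zero_mem _, ?_⟩
      rw [← add_zero 0, stackSum_add, stackSum_single_zero, stackSum_single_zero]
    · refine ⟨0, zero_mem _, _, AddSubmonoid.subset_closure ⟨p, hu, q, hv, h, rfl⟩, ?_⟩
      rw [← add_zero 0, stackSum_add, stackSum_zero_single, stackSum_zero_single]
  | refl u =>
    exact ⟨0, zero_mem _, 0, zero_mem _, by
      ext (i | i | i) <;> simp [stackSum, CharTwo.add_self_eq_zero]⟩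
  | symm u v h ih =>
    rw [add_comm]
    exact ih ((stackSetoid a b).trans' hu ((stackSetoid a b).symm' h))
  | trans u v w huv _ ih₁ ih₂ =>
    obtain ⟨f, hf, g, hg, hfg⟩ := ih₁ hu
    obtain ⟨f', hf', g', hg', hfg'⟩ := ih₂ ((stackSetoid a b).trans' hu huv)
    refine ⟨f + f', add_mem hf hf', g + g', add_mem hg hg', ?_⟩
    rw [stackSum_add, hfg, hfg', add_assoc, ← add_assoc (Pi.single v 1), ← Pi.single_add]
    simp [CharTwo.add_self_eq_zero]

lemma exists_rows_of_pmul {x y : PV n} (h : (pmul a b).r x y) :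
    ∃ t m s : Fin n → ZMod 2,
      Sum.elim t m ∈ pairSums a (upEmb ⁻¹' stackComponent a b (outEmb x)) ∧
      Sum.elim m s ∈ pairSums b (downEmb ⁻¹' stackComponent a b (outEmb x)) ∧
      Sum.elim t s = Pi.single x 1 + Pi.single y 1 := by
  obtain ⟨f, hf, g, hg, hfg⟩ :=
    exists_stackSum_eq_of_stackSetoid ((stackSetoid a b).refl' (outEmb x)) h
  have hout : stackSum f g ∘ outEmb = Pi.single x 1 + Pi.single y 1 := by
    ext v
    simp [hfg, Pi.single_apply, outEmb_injective.eq_iff]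
  have hmid : g ∘ Sum.inl = f ∘ Sum.inr := by
    ext i
    have hi : f (.inr i) + g (.inl i) = 0 := by
      have := congrFun hfg (.inr (.inl i))
      rcases x with j | j <;> rcases y with k | k <;> simpa [stackSum, outEmb] using this
    exact (CharTwo.add_eq_zero.1 hi).symm
  refine ⟨f ∘ .inl, f ∘ .inr, g ∘ .inr, ?_, ?_, ?_⟩
  · rwa [Sum.elim_comp_inl_inr]
  · rwa [← hmid, Sum.elim_comp_inl_inr]
  · rw [← hout]
    ext (i | i) <;> rfl

theorem IsPlanar.pmul (ha : IsPlanar a) (hb : IsPlanar b) : IsPlanar (pmul a b) := by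
  rintro ⟨w, x, y, z, hwx, hxy, hyz, hwy, hxz, hne⟩
  obtain ⟨t, m, s, htm, hms, hts⟩ := exists_rows_of_pmul hwy
  obtain ⟨t', m', s', htm', hms', hts'⟩ := exists_rows_of_pmul hxz
  have hdisj : ∀ v ∈ stackComponent a b (outEmb w), ∀ v' ∈ stackComponent a b (outEmb x),
      ¬ (stackSetoid a b).r v v' := fun v hv v' hv' hvv' =>
    hne ((stackSetoid a b).trans' hv ((stackSetoid a b).trans' hvv' ((stackSetoid a b).symm' hv')))
  have hmm' : ∀ i, m i * m' i = 0 := by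
    intro i
    by_cases hi : upEmb (.inr i) ∈ stackComponent a b (outEmb w)
    · have hi' : upEmb (.inr i) ∉ stackComponent a b (outEmb x) := fun hi' =>
        hdisj _ hi _ hi' ((stackSetoid a b).refl' _)
      rw [show m' i = 0 from apply_eq_zero_of_mem_pairSums (x := .inr i) htm' hi', mul_zero]
    · rw [show m i = 0 from apply_eq_zero_of_mem_pairSums (x := .inr i) htm hi, zero_mul]
  have hzero : orderForm (ordIdx n) (Sum.elim t s) (Sum.elim t' s') = 0 := by
    rw [orderForm_ordIdx_stack (sum_eq_sum_of_elim_mem_pairSums htm)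
        (sum_eq_sum_of_elim_mem_pairSums hms) (sum_eq_sum_of_elim_mem_pairSums hms') hmm',
      ha.orderForm_eq_zero (fun p hp p' hp' h => hdisj _ hp _ hp' (stackSetoid_upEmb h)) htm htm',
      hb.orderForm_eq_zero (fun p hp p' hp' h => hdisj _ hp _ hp' (stackSetoid_downEmb h)) hms hms',
      add_zero]
  have hone : orderForm (ordIdx n) (Sum.elim t s) (Sum.elim t' s') = 1 := by
    rw [hts, hts']
    simp only [orderForm_add_left, orderForm_add_right, orderForm_single_single]
    simp [hwx, hyz, hwx.trans (hxy.trans hyz), hxy.not_gt, CharTwo.add_self_eq_zero (1 : ZMod 2)]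
  exact zero_ne_one (hzero.symm.trans hone)

theorem blockCard_pmul_le_two (ha : ∀ x, blockCard a x ≤ 2) (hb : ∀ x, blockCard b x ≤ 2)
    (x : PV n) : blockCard (pmul a b) x ≤ 2 := by
  refine (card_block_le_two_iff _ x).2 fun y z hy hz hxy hxz => ?_
  obtain ⟨t, m, s, htm, hms, hts⟩ := exists_rows_of_pmul hy
  have hxz' : Sum.elim t s x = Sum.elim t s z := by
    have hup : Sum.elim t (Sum.elim m s) ∘ upEmb = Sum.elim t m := by ext (i | i) <;> rfl
    have hdown : Sum.elim t (Sum.elim m s) ∘ downEmb = Sum.elim m s := by ext (i | i) <;> rfl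
    have hout : Sum.elim t (Sum.elim m s) ∘ outEmb = Sum.elim t s := by ext (i | i) <;> rfl
    rw [← hup] at htm
    rw [← hdown] at hms
    rw [← hout]
    exact apply_eq_apply_of_stackSetoid (fun p q => apply_eq_apply_of_mem_pairSums ha htm)
      (fun p q => apply_eq_apply_of_mem_pairSums hb hms) hz
  rw [hts] at hxz'
  by_contra hyz
  simp [hxy, hxz.symm, Ne.symm hyz] at hxz'

theorem even_blockCard_pmul (ha : ∀ x, Even (blockCard a x)) (hb : ∀ x, Even (blockCard b x))
    (x : PV n) : Even (blockCard (pmul a b) x) := by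
  classical
  let F : TV n → ZMod 2 := fun v => if (stackSetoid a b).r (outEmb x) v then 1 else 0
  have hF : ∀ {u v}, (stackSetoid a b).r u v → F u = F v := fun huv =>
    if_congr ⟨fun h => (stackSetoid a b).trans' h huv,
      fun h => (stackSetoid a b).trans' h ((stackSetoid a b).symm' huv)⟩ rfl rfl
  have hup : ∑ p, F (upEmb p) = 0 :=
    sum_eq_zero_of_even_blocks a ha fun p q h => hF (stackSetoid_upEmb h)
  have hdown : ∑ p, F (downEmb p) = 0 :=
    sum_eq_zero_of_even_blocks b hb fun p q h => hF (stackSetoid_downEmb h)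
  have hcard : (blockCard (pmul a b) x : ZMod 2) = ∑ p, F (outEmb p) := by
    rw [blockCard, Nat.card_eq_fintype_card, Fintype.card_subtype, ← Finset.sum_boole]
    rfl
  rw [← ZMod.natCast_eq_zero_iff_even, hcard]
  rw [Fintype.sum_sum_type] at hup hdown ⊢
  simp only [upEmb, downEmb, outEmb] at hup hdown ⊢
  rw [CharTwo.add_eq_zero] at hup hdown ⊢
  exact hup.trans hdown

end Stacking

theorem pmul_mem_Motzkin {n : ℕ} {a b : PElt n} (ha : a ∈ Motzkin n) (hb : b ∈ Motzkin n) :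
    pmul a b ∈ Motzkin n :=
  ⟨ha.1.pmul hb.1, blockCard_pmul_le_two ha.2 hb.2⟩

theorem pmul_mem_Jones {n : ℕ} {a b : PElt n} (ha : a ∈ Jones n) (hb : b ∈ Jones n) :
    pmul a b ∈ Jones n := by
  refine ⟨ha.1.pmul hb.1, fun x => ?_⟩
  have hle := blockCard_pmul_le_two (fun y => (ha.2 y).le) (fun y => (hb.2 y).le) x
  have heven : Even (blockCard (pmul a b) x) :=
    even_blockCard_pmul (fun y => ha.2 y ▸ even_two) (fun y => hb.2 y ▸ even_two) x
  have hpos : 0 < blockCard (pmul a b) x :=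
    Nat.card_pos_iff.2 ⟨⟨x, (pmul a b).refl' x⟩, inferInstance⟩
  obtain ⟨k, hk⟩ := heven
  omega

section Twisted

variable {n : ℕ} {ξ : K} {S : Set (PElt n)}

lemma twistMul_single_single (a b : PElt n) (c d : K) :
    twistMul ξ (Finsupp.single a c) (Finsupp.single b d) =
      Finsupp.single (pmul a b) (c * d * ξ ^ floatCount a b) := by
  simp [twistMul]

lemma twistMul_single_self_iff {a : PElt n} {c : K} (hc : c ≠ 0) :
    twistMul ξ (Finsupp.single a c) (Finsupp.single a c) = Finsupp.single a c ↔
      pmul a a = a ∧ c * ξ ^ floatCount a a = 1 := by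
  rw [twistMul_single_single, Finsupp.single_eq_single_iff, mul_assoc, mul_eq_left₀ hc]
  simp [hc]

lemma single_zpow_mem_EsetTwist_TwistInt_iff (hξ : ξ ≠ 0) {a : PElt n} (ha : a ∈ S) :
    Finsupp.single a (ξ ^ (-(floatCount a a : ℤ))) ∈ EsetTwist ξ (TwistInt ξ S) ↔ a ∈ Eset S := by
  have hinv : ξ ^ (-(floatCount a a : ℤ)) * ξ ^ floatCount a a = 1 := by
    rw [zpow_neg, zpow_natCast, inv_mul_cancel₀ (pow_ne_zero _ hξ)]
  have hmem : Finsupp.single a (ξ ^ (-(floatCount a a : ℤ))) ∈ TwistInt ξ S := ⟨_, a, ha, rfl⟩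
  have hidem := twistMul_single_self_iff (ξ := ξ) (a := a)
    (zpow_ne_zero (-(floatCount a a : ℤ)) hξ)
  exact ⟨fun h => ⟨ha, (hidem.1 h.2).1⟩, fun h => ⟨hmem, hidem.2 ⟨h.2, hinv⟩⟩⟩

theorem bijOn_Eset_EsetTwist_TwistInt (hξ : ξ ≠ 0) :
    Set.BijOn (fun a : PElt n => Finsupp.single a (ξ ^ (-(floatCount a a : ℤ))))
      (Eset S) (EsetTwist ξ (TwistInt ξ S)) := by
  refine ⟨fun a ha => (single_zpow_mem_EsetTwist_TwistInt_iff hξ ha.1).2 ha,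
    fun a _ b _ hab => ?_, ?_⟩
  · rcases (Finsupp.single_eq_single_iff _ _ _ _).1 hab with h | h
    · exact h.1
    · exact absurd h.1 (zpow_ne_zero _ hξ)
  · rintro _ ⟨⟨i, a, ha, rfl⟩, hidem⟩
    obtain ⟨haa, hi⟩ := (twistMul_single_self_iff (zpow_ne_zero i hξ)).1 hidem
    have hscalar : ξ ^ (-(floatCount a a : ℤ)) = ξ ^ i := by
      rw [zpow_neg, zpow_natCast, eq_inv_of_mul_eq_one_left hi]
    exact ⟨a, ⟨ha, haa⟩, congrArg _ hscalar⟩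

lemma TwistNat_eq_TwistInt_of_pow_eq_one {m : ℕ} (hm : 0 < m) (hξm : ξ ^ m = 1) :
    TwistNat ξ S = TwistInt ξ S := by
  refine Set.Subset.antisymm ?_ ?_
  · rintro _ ⟨i, a, ha, rfl⟩
    exact ⟨i, a, ha, by rw [zpow_natCast]⟩
  · rintro _ ⟨i, a, ha, rfl⟩
    refine ⟨(i % m).toNat, a, ha, ?_⟩
    have hξ : ξ ≠ 0 := (IsUnit.of_pow_eq_one hξm hm.ne').ne_zero
    have hmod : ξ ^ i = ξ ^ (i % m) := by
      conv_lhs => rw [← Int.emod_add_mul_ediv i m]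
      rw [zpow_add₀ hξ, zpow_mul, zpow_natCast, hξm, one_zpow, mul_one]
    rw [hmod, ← zpow_natCast, Int.toNat_of_nonneg (Int.emod_nonneg i (by omega))]

lemma TwistedVariant_subset_TwistNat (hS : ∀ a ∈ S, ∀ b ∈ S, pmul a b ∈ S) :
    TwistedVariant ξ S ⊆ TwistNat ξ S := by
  refine Set.sInter_subset_of_mem ⟨fun a ha => ⟨0, a, ha, by rw [pow_zero]⟩, ?_⟩
  rintro _ ⟨i, a, ha, rfl⟩ _ ⟨j, b, hb, rfl⟩
  exact ⟨i + j + floatCount a b, pmul a b, hS a ha b hb, by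
    rw [twistMul_single_single, pow_add, pow_add]⟩

lemma EsetTwist_mono {X Y : Set (PAlg n K)} (h : X ⊆ Y) : EsetTwist ξ X ⊆ EsetTwist ξ Y :=
  fun _ hf => ⟨h hf.1, hf.2⟩

lemma EsetTwist_TwistNat_subset (hξ : ξ ≠ 0) (hroot : ¬ ∃ m : ℕ, 0 < m ∧ ξ ^ m = 1) :
    EsetTwist ξ (TwistNat ξ S) ⊆
      {f | ∃ a ∈ Eset S, floatCount a a = 0 ∧ f = Finsupp.single a (1 : K)} := by
  rintro _ ⟨⟨i, a, ha, rfl⟩, hidem⟩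
  obtain ⟨haa, hi⟩ := (twistMul_single_self_iff (pow_ne_zero i hξ)).1 hidem
  rw [← pow_add] at hi
  have hadd : i + floatCount a a = 0 := by
    by_contra hne
    exact hroot ⟨_, Nat.pos_of_ne_zero hne, hi⟩
  obtain ⟨rfl, hfloat⟩ := Nat.add_eq_zero_iff.1 hadd
  exact ⟨a, ⟨ha, haa⟩, hfloat, by rw [pow_zero]⟩

lemma single_one_mem_EsetTwist_TwistedVariant {a : PElt n} (ha : a ∈ Eset S)
    (hfloat : floatCount a a = 0) :
    Finsupp.single a (1 : K) ∈ EsetTwist ξ (TwistedVariant ξ S) :=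
  ⟨fun _ hT => hT.1 a ha.1,
    (twistMul_single_self_iff one_ne_zero).2 ⟨ha.2, by rw [hfloat, pow_zero, mul_one]⟩⟩

end Twisted

theorem twisted_idempotents_general {n : ℕ} {S : Set (PElt n)}
    (hS : ∀ a ∈ S, ∀ b ∈ S, pmul a b ∈ S) {ξ : K} (hξ : ξ ≠ 0) :
    (Set.BijOn (fun a : PElt n => Finsupp.single a (ξ ^ (-(floatCount a a : ℤ))))
        (Eset S) (EsetTwist ξ (TwistInt ξ S)) ∧
      ∀ a ∈ S, (a ∈ Eset S ↔
        Finsupp.single a (ξ ^ (-(floatCount a a : ℤ))) ∈ EsetTwist ξ (TwistInt ξ S))) ∧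
    ((∃ m : ℕ, 0 < m ∧ ξ ^ m = 1) →
      Nat.card ↥(EsetTwist ξ (TwistNat ξ S)) = Nat.card ↥(Eset S)) ∧
    ((¬ ∃ m : ℕ, 0 < m ∧ ξ ^ m = 1) →
      EsetTwist ξ (TwistNat ξ S) = EsetTwist ξ (TwistedVariant ξ S) ∧
      EsetTwist ξ (TwistedVariant ξ S) =
        {f | ∃ a ∈ Eset S, floatCount a a = 0 ∧ f = Finsupp.single a (1 : K)}) := by
  have hbij := bijOn_Eset_EsetTwist_TwistInt (S := S) hξ
  refine ⟨⟨hbij, fun a ha => (single_zpow_mem_EsetTwist_TwistInt_iff hξ ha).symm⟩, ?_,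
    fun hroot => ?_⟩
  · rintro ⟨m, hm, hξm⟩
    rw [TwistNat_eq_TwistInt_of_pow_eq_one hm hξm]
    exact (Nat.card_congr (hbij.equiv _)).symm
  · have hvariant : EsetTwist ξ (TwistedVariant ξ S) ⊆ EsetTwist ξ (TwistNat ξ S) :=
      EsetTwist_mono (TwistedVariant_subset_TwistNat hS)
    have hnat := EsetTwist_TwistNat_subset (S := S) hξ hroot
    have hfloat : {f | ∃ a ∈ Eset S, floatCount a a = 0 ∧ f = Finsupp.single a (1 : K)} ⊆
        EsetTwist ξ (TwistedVariant ξ S) := by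
      rintro _ ⟨a, ha, hfloat, rfl⟩
      exact single_one_mem_EsetTwist_TwistedVariant ha hfloat
    exact ⟨(hnat.trans hfloat).antisymm hvariant, (hvariant.trans hnat).antisymm hfloat⟩

/-- Proposition 4.4. Let `S` be `M_n` or `J_n`, `k` a field and
`ξ ∈ k∖{0}`. Then (i) `α ↦ ξ^{−m(α,α)}·α` is a bijection from `E(S)` onto
`E(⟨S^ξ, ξ·1, ξ⁻¹·1⟩)`, with `α ∈ E(S)` iff `ξ^{−m(α,α)}·α ∈ E(⟨S^ξ, ξ·1, ξ⁻¹·1⟩)`;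
(ii) if `ξ` is a root of unity then `|E(⟨S^ξ, ξ·1⟩)| = |E(S)|`; and (iii) if `ξ` is not
a root of unity then `E(⟨S^ξ, ξ·1⟩) = E(S^ξ) = {α ∈ E(S) : m(α,α) = 0}`. -/
theorem twisted_idempotents {K : Type} [Field K] (n : ℕ) (S : Set (PElt n))
    (hS : S = Motzkin n ∨ S = Jones n) (ξ : K) (hξ : ξ ≠ 0) :
    (Set.BijOn (fun a : PElt n => Finsupp.single a (ξ ^ (-(floatCount a a : ℤ))))
        (Eset S) (EsetTwist ξ (TwistInt ξ S)) ∧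
      ∀ a ∈ S, (a ∈ Eset S ↔
        Finsupp.single a (ξ ^ (-(floatCount a a : ℤ))) ∈ EsetTwist ξ (TwistInt ξ S))) ∧
    ((∃ m : ℕ, 0 < m ∧ ξ ^ m = 1) →
      Nat.card ↥(EsetTwist ξ (TwistNat ξ S)) = Nat.card ↥(Eset S)) ∧
    ((¬ ∃ m : ℕ, 0 < m ∧ ξ ^ m = 1) →
      EsetTwist ξ (TwistNat ξ S) = EsetTwist ξ (TwistedVariant ξ S) ∧
      EsetTwist ξ (TwistedVariant ξ S) =
        {f | ∃ a ∈ Eset S, floatCount a a = 0 ∧ f = Finsupp.single a (1 : K)}) :=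
  twisted_idempotents_general (hS.elim
    (fun h => h ▸ fun _ ha _ hb => pmul_mem_Motzkin ha hb)
    (fun h => h ▸ fun _ ha _ hb => pmul_mem_Jones ha hb)) hξ
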